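/- Let θ > 0, C > 0, 0 < F < 1, and let 1 ≤ N' ≤ N be naturals with N·θ < 1. Define r(L) = (1 - Lθ)·C·F^{L-1} and let S_L ⊆ ℝ^N be the set of 0-1 vectors with exactly L ones. Assume that L·r(L) ≤ (L+1)·r(L+1) for all 1 ≤ L < N (i.e. N' ≤ N ≤ L_I, the case where the total rate is nondecreasing up to N). Then for every point x in the convex hull of {0} ∪ ⋃_{L=1}^{N} { r(L)·s : s ∈ S_L }, the scaled point (N'·r(N')/(N·r(N)))·x lies in the convex hull of {0} ∪ ⋃_{L=1}^{N'} { r(L)·s : s ∈ S_L }. That is, after reducing the maximum number of pairs from N to N', the stability region achieves at least the fraction r_T(N')/r_T(N) of the original stability region. -/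

import Mathlib

/-- `schedSet N L` is the set of 0-1 vectors in `ℝ^N` with exactly `L` coordinates equal to 1
(equivalently, with `ℓ¹`-norm `L`). -/
def schedSet (N L : ℕ) : Set (Fin N → ℝ) :=
  {s | (∀ i, s i = 0 ∨ s i = 1) ∧ ∑ i, s i = L}

/-!
A schedule with `L ≥ N'` active users is `L / N'` times the average of the schedules that activate
`N'` of these users, so time sharing among the latter serves each of the `L` users at rate
`N' r(N') / L`: the total rate `N' r(N')` is attained. Since `L r(L) ≤ N r(N)`, this is at least the
scaled rate `r(L) N' r(N') / (N r(N))`. A schedule with `L ≤ N'` active users is still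
available, and the scaling factor is at most `1`.
-/

open Finset

theorem sum_powersetCard_succ_sum {ι M : Type*} [AddCommMonoid M] (A : Finset ι) (m : ℕ)
    (v : ι → M) :
    ∑ T ∈ A.powersetCard (m + 1), ∑ i ∈ T, v i = (#A - 1).choose m • ∑ i ∈ A, v i := by
  classical
  rw [sum_comm' (t' := A) (s' := fun i => {T ∈ A.powersetCard (m + 1) | {i} ⊆ T}) (by grind),
    smul_sum]
  refine sum_congr rfl fun i hi => ?_
  rw [sum_const, card_filter_powersetCard_subset _ _ _ (by simpa using hi) (by simp)]
  simp

section Convex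

variable {𝕜 ι E : Type*} [Field 𝕜] [LinearOrder 𝕜] [IsStrictOrderedRing 𝕜]
  [AddCommGroup E] [Module 𝕜 E] {K : Set E}

theorem card_div_smul_sum_mem_of_convex (hK : Convex 𝕜 K) {v : ι → E} {A : Finset ι} {m : ℕ}
    (hm : m ≤ #A) (h : ∀ T ⊆ A, #T = m → ∑ i ∈ T, v i ∈ K) :
    ((m : 𝕜) / #A) • ∑ i ∈ A, v i ∈ K := by
  obtain _ | m := m
  · simpa using h ∅ (empty_subset A) card_empty
  have hchoose : 0 < ((#A).choose (m + 1) : 𝕜) := by exact_mod_cast Nat.choose_pos hm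
  have haverage : ∑ T ∈ A.powersetCard (m + 1), ((#A).choose (m + 1) : 𝕜)⁻¹ • ∑ i ∈ T, v i ∈ K :=
    hK.sum_mem (fun _ _ => by positivity) (by simp [hchoose.ne']) fun T hT =>
      h T (mem_powersetCard.1 hT).1 (mem_powersetCard.1 hT).2
  have hratio : ((#A).choose (m + 1) : 𝕜)⁻¹ * (#A - 1).choose m = (m + 1 : ℕ) / #A := by
    obtain ⟨k, hk⟩ : ∃ k, #A = k + 1 := Nat.exists_eq_add_one.2 (by lia)
    have := congrArg (Nat.cast (R := 𝕜)) (Nat.add_one_mul_choose_eq k m)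
    rw [hk] at hchoose ⊢
    push_cast at this ⊢
    field_simp
    simpa [mul_comm] using this
  rwa [← smul_sum, sum_powersetCard_succ_sum, ← Nat.cast_smul_eq_nsmul 𝕜, smul_smul, hratio]
    at haverage

theorem smul_mem_of_convex_of_le (hK : Convex 𝕜 K) (hzero : (0 : E) ∈ K) {x : E} {a b : 𝕜}
    (hx : b • x ∈ K) (ha : 0 ≤ a) (hab : a ≤ b) : a • x ∈ K := by
  have hscale : a / b * b = a := div_mul_cancel_of_imp fun hb => le_antisymm (hb ▸ hab) ha
  rw [← hscale, ← smul_smul]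
  exact hK.smul_mem_of_zero_mem hzero hx
    ⟨div_nonneg ha (ha.trans hab), div_le_one_of_le₀ hab (ha.trans hab)⟩

end Convex

theorem mem_schedSet_iff_exists_sum_single {n L : ℕ} {s : Fin n → ℝ} :
    s ∈ schedSet n L ↔ ∃ A : Finset (Fin n), #A = L ∧ ∑ i ∈ A, Pi.single i 1 = s := by
  constructor
  · rintro ⟨h01, hsum⟩
    have hs : ∑ i with s i = 1, Pi.single i 1 = s := by
      ext i
      rcases h01 i with h | h <;> simp [Finset.sum_apply, Pi.single_apply, h]
    refine ⟨({i | s i = 1} : Finset (Fin n)), ?_, hs⟩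
    rw [← hs] at hsum
    simpa [Finset.sum_apply, Pi.single_apply] using hsum
  · rintro ⟨A, rfl, rfl⟩
    constructor
    · intro i
      by_cases hi : i ∈ A <;> simp [Finset.sum_apply, Pi.single_apply, hi]
    · simp [Finset.sum_apply, Pi.single_apply]

/-- The stability region of `n` users when at most `M` of them are scheduled simultaneously and
each of `L` active users is served at rate `r L`. The idle schedule contributes the origin. -/
def stabilityRegion (n M : ℕ) (r : ℕ → ℝ) : Set (Fin n → ℝ) :=
  convexHull ℝ ({0} ∪ ⋃ L ∈ Set.Icc 1 M, (fun s => r L • s) '' schedSet n L)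

namespace stabilityRegion

variable {n M L : ℕ} {r : ℕ → ℝ} {s : Fin n → ℝ}

protected theorem convex : Convex ℝ (stabilityRegion n M r) := convex_convexHull ℝ _

theorem zero_mem : 0 ∈ stabilityRegion n M r := subset_convexHull ℝ _ (Or.inl rfl)

theorem rate_smul_mem (hLM : L ≤ M) (hs : s ∈ schedSet n L) : r L • s ∈ stabilityRegion n M r := by
  obtain rfl | hL := L.eq_zero_or_pos
  · obtain ⟨A, hA, rfl⟩ := mem_schedSet_iff_exists_sum_single.1 hs
    simpa [card_eq_zero.1 hA] using zero_mem
  · exact subset_convexHull ℝ _ (Or.inr (Set.mem_biUnion ⟨hL, hLM⟩ ⟨s, hs, rfl⟩))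

theorem smul_mem_of_totalRate_le (hL : 0 < L) (hML : M ≤ L) (hs : s ∈ schedSet n L) {a : ℝ}
    (ha : 0 ≤ a) (hrate : L * a ≤ M * r M) : a • s ∈ stabilityRegion n M r := by
  obtain ⟨A, rfl, rfl⟩ := mem_schedSet_iff_exists_sum_single.1 hs
  have hshare : ((M : ℝ) / #A) • ∑ i ∈ A, r M • Pi.single i 1 ∈ stabilityRegion n M r := by
    refine card_div_smul_sum_mem_of_convex stabilityRegion.convex hML fun T _ hT => ?_
    rw [← smul_sum]
    exact rate_smul_mem le_rfl (mem_schedSet_iff_exists_sum_single.2 ⟨T, hT, rfl⟩)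
  rw [← smul_sum, smul_smul] at hshare
  refine smul_mem_of_convex_of_le stabilityRegion.convex zero_mem hshare ha ?_
  rwa [div_mul_eq_mul_div, le_div_iff₀' (by exact_mod_cast hL)]

end stabilityRegion

theorem reduce_pairs_fraction_general {n N N' : ℕ} (hN'N : N' ≤ N) {r : ℕ → ℝ}
    (hpos : 0 < N * r N) (hnonneg : ∀ L ∈ Set.Icc N' N, 0 ≤ r L)
    (hmax : ∀ L ∈ Set.Icc N' N, L * r L ≤ N * r N) :
    ∀ x ∈ stabilityRegion n N r, ((N' * r N') / (N * r N)) • x ∈ stabilityRegion n N' r := by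
  have hN' : N' ∈ Set.Icc N' N := ⟨le_rfl, hN'N⟩
  set c := (N' * r N') / (N * r N)
  have hc0 : 0 ≤ c := div_nonneg (mul_nonneg N'.cast_nonneg (hnonneg N' hN')) hpos.le
  have hc1 : c ≤ 1 := (div_le_one hpos).2 (hmax N' hN')
  suffices hsub : stabilityRegion n N r ⊆ (fun y => c • y) ⁻¹' stabilityRegion n N' r from
    fun _ hx => hsub hx
  refine convexHull_min ?_ (stabilityRegion.convex.smul_preimage c)
  rintro y (rfl | hy)
  · simpa only [Set.mem_preimage, smul_zero] using stabilityRegion.zero_mem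
  obtain ⟨L, ⟨hL, hLN⟩, s, hs, rfl⟩ := Set.mem_iUnion₂.1 hy
  change c • r L • s ∈ stabilityRegion n N' r
  rcases le_total L N' with hLN' | hN'L
  · exact stabilityRegion.convex.smul_mem_of_zero_mem stabilityRegion.zero_mem
      (stabilityRegion.rate_smul_mem hLN' hs) ⟨hc0, hc1⟩
  · have hLmem : L ∈ Set.Icc N' N := ⟨hN'L, hLN⟩
    rw [smul_smul]
    refine stabilityRegion.smul_mem_of_totalRate_le hL hN'L hs (mul_nonneg hc0 (hnonneg L hLmem)) ?_
    calc L * (c * r L) = c * (L * r L) := by ring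
      _ ≤ c * (N * r N) := mul_le_mul_of_nonneg_left (hmax L hLmem) hc0
      _ = N' * r N' := div_mul_cancel₀ _ hpos.ne'

/-- Symmetric imperfect case with `r(L) = (1 - Lθ)·C·F^(L-1)`, in the regime where the total
rate `L·r(L)` is nondecreasing up to `N` (i.e. `N' ≤ N ≤ L_I`): after reducing the maximum
number of pairs from `N` to `N'`, the stability region achieves at least the fraction
`r_T(N')/r_T(N) = (N'·r(N'))/(N·r(N))` of the original stability region — every point `x` of
the convex hull of `{0} ∪ ⋃_{L=1}^{N} { r(L) • s : s ∈ S_L }`, once scaled by this fraction,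
lies in the convex hull of `{0} ∪ ⋃_{L=1}^{N'} { r(L) • s : s ∈ S_L }`. -/
theorem reduce_pairs_fraction
    (θ C F : ℝ) (hθ : 0 < θ) (hC : 0 < C) (hF0 : 0 < F) (hF1 : F < 1)
    (N N' : ℕ) (hN' : 1 ≤ N') (hN'N : N' ≤ N) (hNθ : (N : ℝ) * θ < 1)
    (r : ℕ → ℝ) (hrdef : ∀ L, r L = (1 - (L : ℝ) * θ) * C * F ^ ((L : ℝ) - 1))
    (hmono : ∀ L, 1 ≤ L → L < N → (L : ℝ) * r L ≤ ((L : ℝ) + 1) * r (L + 1)) :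
    ∀ x ∈ convexHull ℝ ({0} ∪ ⋃ L ∈ Set.Icc 1 N, (fun s => r L • s) '' schedSet N L),
      (((N' : ℝ) * r N') / ((N : ℝ) * r N)) • x
        ∈ convexHull ℝ ({0} ∪ ⋃ L ∈ Set.Icc 1 N', (fun s => r L • s) '' schedSet N L) := by
  have hrpos (L : ℕ) (hL : L ≤ N) : 0 < r L := by
    have hLθ : (L : ℝ) * θ < 1 := lt_of_le_of_lt (by gcongr) hNθ
    rw [hrdef]
    exact mul_pos (mul_pos (sub_pos.2 hLθ) hC) (Real.rpow_pos_of_pos hF0 _)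
  have htotal : MonotoneOn (fun L : ℕ => (L : ℝ) * r L) (Set.Icc 1 N) :=
    monotoneOn_of_le_add_one Set.ordConnected_Icc fun L _ hL hL' => by
      simpa using hmono L hL.1 hL'.2
  have hN : 1 ≤ N := hN'.trans hN'N
  exact reduce_pairs_fraction_general hN'N (mul_pos (by exact_mod_cast hN) (hrpos N le_rfl))
    (fun L hL => (hrpos L hL.2).le)
    fun L hL => htotal ⟨hN'.trans hL.1, hL.2⟩ ⟨hN, le_rfl⟩ hL.2
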